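/- Let D_0, ..., D_d be the adjacency matrices of an association scheme with d classes on X, with intersection numbers p_{ij}^k, and let I be the structure ideal. Then the residue classes in ℂ[x_0, ..., x_d]/I of the d + 1 polynomials 1, x_1, x_2, ..., x_d form a basis of ℂ[x_0, ..., x_d]/I as a ℂ-vector space. -/

import Mathlib

/-!
Sending `X i` to `D i` annihilates the generators of the structure ideal, so it induces an algebra
homomorphism from the quotient to the (commutative) algebra generated by the `D i`. The images
`D 0 = 1, D 1, …, D d` of the residue classes are linearly independent, because the matrices are
nonzero `0/1`-matrices with pairwise disjoint supports (they sum to `J`); hence so are the classes.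
Conversely, the structure polynomials rewrite each product of two variables as a linear combination
of variables, so the span of the classes contains `1` and is stable under multiplication by every
variable, and therefore is the whole quotient.
-/

open scoped ComplexOrder in
/-- The `0/1`-matrices summing to the all-ones matrix have disjoint supports, so nonzero ones are
linearly independent. -/
theorem linearIndependent_of_sum_eq_ones {X ι : Type*} [Fintype ι]
    (D : ι → Matrix X X ℂ)
    (h01 : ∀ i x y, D i x y = 0 ∨ D i x y = 1)
    (hDne : ∀ i, D i ≠ 0)
    (hDsum : (∑ i, D i) = Matrix.of (fun _ _ => (1 : ℂ))) :
    LinearIndependent ℂ D := by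
  classical
  rw [Fintype.linearIndependent_iff]
  intro g hg i
  obtain ⟨x, y, hxy⟩ : ∃ x y, D i x y ≠ 0 := by
    by_contra! h
    exact hDne i (Matrix.ext h)
  have hi : D i x y = 1 := (h01 i x y).resolve_left hxy
  have hsum : ∑ j, D j x y = 1 := by
    have := congrFun (congrFun hDsum x) y
    simpa [Matrix.sum_apply] using this
  rw [← Finset.add_sum_erase _ _ (Finset.mem_univ i), hi, add_eq_left,
    Finset.sum_eq_zero_iff_of_nonneg] at hsum
  · have h := congrFun (congrFun hg x) y
    simp only [Matrix.sum_apply, Matrix.smul_apply, smul_eq_mul, Matrix.zero_apply] at h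
    rw [Finset.sum_eq_single i] at h
    · simpa [hi] using h
    · intro j _ hj
      rw [hsum j (by simp [hj]), mul_zero]
    · simp
  · intro j _
    rcases h01 j x y with h | h <;> simp [h]


/-- The residue classes of `1, x 1, …, x d` form a ℂ-basis of the quotient of the
polynomial ring by the structure ideal (the normal set of the structure ideal). -/
theorem assocScheme_normal_set_basis
    {X : Type*} [Fintype X] [Nonempty X] [DecidableEq X]
    {d : ℕ} (hd : 1 ≤ d)
    (D : Fin (d + 1) → Matrix X X ℂ)
    (p : Fin (d + 1) → Fin (d + 1) → Fin (d + 1) → ℕ)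
    (h01 : ∀ i x y, D i x y = 0 ∨ D i x y = 1)
    (hDne : ∀ i, D i ≠ 0)
    (hD0 : D 0 = 1)
    (hDsum : (∑ i, D i) = Matrix.of (fun _ _ => (1 : ℂ)))
    (hDsym : ∀ i, (D i).IsSymm)
    (hpsym : ∀ i j k, p i j k = p j i k)
    (hDmul : ∀ i j, D i * D j = ∑ k, (p i j k : ℂ) • D k)
    (I : Ideal (MvPolynomial (Fin (d + 1)) ℂ))
    (hI : I = Ideal.span
      ({MvPolynomial.X 0 - 1} ∪
       {f : MvPolynomial (Fin (d + 1)) ℂ | ∃ i j : Fin (d + 1), i ≤ j ∧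
          f = MvPolynomial.X i * MvPolynomial.X j -
            ∑ k, (p i j k : ℂ) • MvPolynomial.X k})) :
    LinearIndependent ℂ (fun i : Fin (d + 1) =>
      Ideal.Quotient.mk I (if i = 0 then 1 else MvPolynomial.X i)) ∧
    Submodule.span ℂ (Set.range (fun i : Fin (d + 1) =>
      Ideal.Quotient.mk I (if i = 0 then 1 else MvPolynomial.X i))) = ⊤ := by
  have hI0 : Ideal.Quotient.mk I (MvPolynomial.X 0) = 1 := by
    rw [← map_one (Ideal.Quotient.mk I), Ideal.Quotient.eq, hI]
    exact Ideal.subset_span (Or.inl rfl)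
  have hmk : ∀ i : Fin (d + 1), Ideal.Quotient.mk I (if i = 0 then 1 else MvPolynomial.X i) =
      Ideal.Quotient.mk I (MvPolynomial.X i) := by
    intro i
    split_ifs with h
    · rw [h, hI0, map_one]
    · rfl
  simp only [hmk]
  have hsmul : ∀ (a : ℂ) (f : MvPolynomial (Fin (d + 1)) ℂ),
      Ideal.Quotient.mk I (a • f) = a • Ideal.Quotient.mk I f := fun _ _ => rfl
  have hmul : ∀ i j : Fin (d + 1), Ideal.Quotient.mk I (MvPolynomial.X i * MvPolynomial.X j) =
      ∑ k, (p i j k : ℂ) • Ideal.Quotient.mk I (MvPolynomial.X k) := by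
    -- only the generators with `i ≤ j` are available; the others follow from `p i j k = p j i k`
    have key : ∀ i j : Fin (d + 1), i ≤ j →
        Ideal.Quotient.mk I (MvPolynomial.X i * MvPolynomial.X j) =
        ∑ k, (p i j k : ℂ) • Ideal.Quotient.mk I (MvPolynomial.X k) := by
      intro i j hij
      simp only [← hsmul]
      rw [← map_sum, Ideal.Quotient.eq, hI]
      exact Ideal.subset_span (Or.inr ⟨i, j, hij, rfl⟩)
    intro i j
    rcases le_total i j with h | h
    · exact key i j h
    · rw [mul_comm, key j i h]
      simp only [hpsym j i]
  constructor
  · have hcomm : ∀ a ∈ Set.range D, ∀ b ∈ Set.range D, a * b = b * a := by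
      rintro _ ⟨i, rfl⟩ _ ⟨j, rfl⟩
      rw [hDmul, hDmul]
      simp only [hpsym i j]
    -- `MvPolynomial.aeval` needs a commutative target, which the full matrix algebra is not
    let _ : CommRing (Algebra.adjoin ℂ (Set.range D)) :=
      Algebra.adjoinCommRingOfComm ℂ hcomm
    let φ : MvPolynomial (Fin (d + 1)) ℂ →ₐ[ℂ] Algebra.adjoin ℂ (Set.range D) :=
      MvPolynomial.aeval fun i => ⟨D i, Algebra.subset_adjoin ⟨i, rfl⟩⟩
    let ψ : MvPolynomial (Fin (d + 1)) ℂ →ₐ[ℂ] Matrix X X ℂ :=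
      (Algebra.adjoin ℂ (Set.range D)).val.comp φ
    have hψ : ∀ i, ψ (MvPolynomial.X i) = D i := by
      intro i
      simp [ψ, φ]
    have hker : I ≤ RingHom.ker ψ := by
      rw [hI, Ideal.span_le]
      rintro f (rfl | ⟨i, j, -, rfl⟩)
      · simp [RingHom.mem_ker, hψ, hD0]
      · simp only [SetLike.mem_coe, RingHom.mem_ker, map_sub, map_mul, map_sum, map_smul, hψ,
          hDmul, sub_self]
    have hD := linearIndependent_of_sum_eq_ones D h01 hDne hDsum
    rw [Fintype.linearIndependent_iff] at hD ⊢
    intro g hg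
    apply hD g
    simp only [← hsmul] at hg
    rw [← map_sum, Ideal.Quotient.eq_zero_iff_mem] at hg
    have h := hker hg
    simpa only [RingHom.mem_ker, map_sum, map_smul, hψ] using h
  · set S := Submodule.span ℂ (Set.range fun i : Fin (d + 1) =>
      Ideal.Quotient.mk I (MvPolynomial.X i)) with hS
    have hX : ∀ i, Ideal.Quotient.mk I (MvPolynomial.X i) ∈ S :=
      fun i => Submodule.subset_span ⟨i, rfl⟩
    have hstable : ∀ i, ∀ q ∈ S, q * Ideal.Quotient.mk I (MvPolynomial.X i) ∈ S := by
      intro i q hq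
      induction hq using Submodule.span_induction with
      | mem q hq =>
        obtain ⟨j, rfl⟩ := hq
        rw [← map_mul, hmul]
        exact Submodule.sum_mem _ fun k _ => Submodule.smul_mem _ _ (hX k)
      | zero => simp
      | add a b _ _ ha hb => rw [add_mul]; exact Submodule.add_mem _ ha hb
      | smul c a _ ha => rw [smul_mul_assoc]; exact Submodule.smul_mem _ _ ha
    rw [eq_top_iff]
    rintro q -
    obtain ⟨f, rfl⟩ := Ideal.Quotient.mk_surjective q
    induction f using MvPolynomial.induction_on with
    | C a =>
      rw [← mul_one (MvPolynomial.C a), ← MvPolynomial.smul_eq_C_mul, hsmul, map_one, ← hI0]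
      exact Submodule.smul_mem _ _ (hX 0)
    | add f g hf hg => rw [map_add]; exact Submodule.add_mem _ hf hg
    | mul_X f i hf => rw [map_mul]; exact hstable i _ hf
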